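/- arXiv:1607.00342 — 5 statements merged into one kernel-verified Lean document; each statement's English description precedes it below -/
import Mathlib

section
/- Under the Cartan-problem hypotheses, the second necessary condition holds: for every x ∈ N and all indices i ∈ {1,…,n} and b, c ∈ {1,…,r}, one has Σ_j ( e^j_b ∂_j e^i_c − e^j_c ∂_j e^i_b ) = Σ_a C^a_{bc} e^i_a, where all functions on U and their partial derivatives are evaluated at the point φ(x). -/
/-!
The condition is `d(dφ^i) = 0` read in the coframe. Differentiating `dφ^i = e^i_a(φ) e^a` at `x`
and evaluating on `(u, v)` minus `(v, u)` gives zero, by symmetry of the second derivative of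
`φ^i`. For `u`, `v` the vectors dual to `e^b`, `e^c`, the terms `e^i_a(φ) de^a(u, v)` contribute
`-∑ a, C^a_{bc} e^i_a`, by the structure equation, while the terms `d(e^i_a(φ)) ∧ e^a` contribute
`∑ j, (e^j_b ∂_j e^i_c - e^j_c ∂_j e^i_b)`, by the chain rule (`fderiv_comp_eq_sum_pd`).
-/

/-- Partial derivative of a real-valued function on `ℝ^m` in the `i`-th coordinate
direction. -/
noncomputable def pd {m : ℕ} (f : (Fin m → ℝ) → ℝ) (i : Fin m) (x : Fin m → ℝ) : ℝ :=
  fderiv ℝ f x (Pi.single i 1)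

/-- Chain rule for `f ∘ φ`, in coordinates on the target of `φ`. -/
lemma fderiv_comp_eq_sum_pd {r n : ℕ} {f : (Fin n → ℝ) → ℝ} {φ : (Fin r → ℝ) → (Fin n → ℝ)}
    {x : Fin r → ℝ} (hf : DifferentiableAt ℝ f (φ x)) (hφ : DifferentiableAt ℝ φ x)
    (u : Fin r → ℝ) :
    fderiv ℝ (fun y => f (φ y)) x u = ∑ j, fderiv ℝ (fun y => φ y j) x u * pd f j (φ x) := by
  have hcomp : fderiv ℝ (fun y => f (φ y)) x = (fderiv ℝ f (φ x)).comp (fderiv ℝ φ x) :=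
    fderiv_comp x hf hφ
  have hcoord (j : Fin n) : fderiv ℝ (fun y => φ y j) x u = fderiv ℝ φ x u j := by
    rw [fderiv_apply hφ]
    rfl
  rw [hcomp, ContinuousLinearMap.comp_apply]
  conv_lhs => rw [pi_eq_sum_univ' (fderiv ℝ φ x u)]
  simp only [map_sum, map_smul, hcoord, smul_eq_mul, pd]

/-- **Cartan problem, second necessary condition.**
Given a coframe `e^a` on an open set `N ⊆ ℝ^r`, a smooth map `φ : N → U ⊆ ℝ^n`, and
smooth functions `C^a_{bc}`, `e^i_a` on `U` with `C^a_{bc} = −C^a_{cb}`, such that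
`de^a = −(1/2) C^a_{bc}(φ) e^b ∧ e^c` and `dφ^i = e^i_a(φ) e^a`, one has
`Σ_j ( e^j_b ∂_j e^i_c − e^j_c ∂_j e^i_b ) = Σ_a C^a_{bc} e^i_a` evaluated at `φ(x)`,
for every `x ∈ N`. -/
theorem cartan_second_necessary_condition {r n : ℕ}
    (N : Set (Fin r → ℝ)) (hN : IsOpen N)
    (U : Set (Fin n → ℝ)) (hU : IsOpen U)
    (eA : Fin r → (Fin r → ℝ) → ((Fin r → ℝ) →L[ℝ] ℝ))
    (heA_smooth : ∀ a, ContDiffOn ℝ (⊤ : ℕ∞) (eA a) N)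
    (hcoframe : ∀ x ∈ N, Function.Bijective (fun u : Fin r → ℝ => (fun a => eA a x u)))
    (φ : (Fin r → ℝ) → (Fin n → ℝ))
    (hφ_smooth : ContDiffOn ℝ (⊤ : ℕ∞) φ N)
    (hφU : ∀ x ∈ N, φ x ∈ U)
    (C : Fin r → Fin r → Fin r → (Fin n → ℝ) → ℝ)
    (hC_smooth : ∀ a b c, ContDiffOn ℝ (⊤ : ℕ∞) (C a b c) U)
    (hC_anti : ∀ a b c, ∀ y ∈ U, C a b c y = - C a c b y)
    (eI : Fin n → Fin r → (Fin n → ℝ) → ℝ)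
    (heI_smooth : ∀ i a, ContDiffOn ℝ (⊤ : ℕ∞) (eI i a) U)
    (hMC : ∀ x ∈ N, ∀ (a : Fin r) (u v : Fin r → ℝ),
      fderiv ℝ (eA a) x u v - fderiv ℝ (eA a) x v u
        = - ∑ b, ∑ c, C a b c (φ x) * (eA b x u) * (eA c x v))
    (hdφ : ∀ x ∈ N, ∀ (i : Fin n) (u : Fin r → ℝ),
      fderiv ℝ (fun y => φ y i) x u = ∑ a, eI i a (φ x) * (eA a x u)) :
    ∀ x ∈ N, ∀ (i : Fin n) (b c : Fin r),
      (∑ j, (eI j b (φ x) * pd (eI i c) j (φ x) - eI j c (φ x) * pd (eI i b) j (φ x)))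
        = ∑ a, C a b c (φ x) * eI i a (φ x) := by
  intro x hx i b c
  have hNx : N ∈ nhds x := hN.mem_nhds hx
  have hφx : ContDiffAt ℝ (⊤ : ℕ∞) φ x := hφ_smooth.contDiffAt hNx
  have hφd : DifferentiableAt ℝ φ x := hφx.differentiableAt (by simp)
  have heAd (a : Fin r) : DifferentiableAt ℝ (eA a) x :=
    ((heA_smooth a).contDiffAt hNx).differentiableAt (by simp)
  have heId (a : Fin r) : DifferentiableAt ℝ (eI i a) (φ x) :=
    ((heI_smooth i a).contDiffAt (hU.mem_nhds (hφU x hx))).differentiableAt (by simp)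
  have hcompd (a : Fin r) : DifferentiableAt ℝ (fun y => eI i a (φ y)) x := (heId a).comp x hφd
  have hsymm : IsSymmSndFDerivAt ℝ (fun y => φ y i) x := by
    refine ContDiffAt.isSymmSndFDerivAt (n := ((⊤ : ℕ∞) : WithTop ℕ∞))
      (contDiffAt_pi.1 hφx i) ?_
    simp only [minSmoothness_of_isRCLikeNormedField]
    exact WithTop.coe_le_coe.2 (le_top : (2 : ℕ∞) ≤ ⊤)
  have hev : fderiv ℝ (fun y => φ y i) =ᶠ[nhds x] fun y => ∑ a, eI i a (φ y) • eA a y := by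
    filter_upwards [hNx] with y hy
    ext1 u
    simp [hdφ y hy i u]
  have hsnd (u v : Fin r → ℝ) : fderiv ℝ (fderiv ℝ (fun y => φ y i)) x u v
      = ∑ a, (eI i a (φ x) * fderiv ℝ (eA a) x u v
        + fderiv ℝ (fun y => eI i a (φ y)) x u * eA a x v) := by
    rw [hev.fderiv_eq, fderiv_fun_sum fun a _ => (hcompd a).fun_smul (heAd a)]
    simp [fderiv_fun_smul (hcompd _) (heAd _)]
  -- `u` and `v` are the members of the dual frame at `x` with indices `b` and `c`.
  obtain ⟨u, hu⟩ := (hcoframe x hx).2 (Pi.single b 1)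
  obtain ⟨v, hv⟩ := (hcoframe x hx).2 (Pi.single c 1)
  have hu' (a : Fin r) : eA a x u = if a = b then 1 else 0 := by
    simpa [Pi.single_apply] using congrFun hu a
  have hv' (a : Fin r) : eA a x v = if a = c then 1 else 0 := by
    simpa [Pi.single_apply] using congrFun hv a
  have hstruct (a : Fin r) :
      fderiv ℝ (eA a) x u v - fderiv ℝ (eA a) x v u = - C a b c (φ x) := by
    simp [hMC x hx a u v, hu', hv']
  have hdφu (j : Fin n) : fderiv ℝ (fun y => φ y j) x u = eI j b (φ x) := by
    simp [hdφ x hx j u, hu']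
  have hdφv (j : Fin n) : fderiv ℝ (fun y => φ y j) x v = eI j c (φ x) := by
    simp [hdφ x hx j v, hv']
  have hzero := hsymm.eq u v
  rw [hsnd, hsnd] at hzero
  simp only [Finset.sum_add_distrib, hu', hv', mul_ite, mul_one, mul_zero,
    Finset.sum_ite_eq', Finset.mem_univ, if_true,
    fderiv_comp_eq_sum_pd (heId _) hφd, hdφu, hdφv] at hzero
  have hC : ∑ a, C a b c (φ x) * eI i a (φ x)
      = ∑ a, eI i a (φ x) * fderiv ℝ (eA a) x v u
        - ∑ a, eI i a (φ x) * fderiv ℝ (eA a) x u v := by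
    rw [← Finset.sum_sub_distrib]
    refine Finset.sum_congr rfl fun a _ => ?_
    linear_combination eI i a (φ x) * hstruct a
  rw [hC, Finset.sum_sub_distrib]
  linear_combination hzero
end

section
/- Under the Cartan-problem hypotheses, the first necessary condition holds: for every x ∈ N and all indices a, b, c, d ∈ {1,…,r}, the cyclic sum over the triple (b,c,d) of [ Σ_e C^a_{eb} C^e_{cd} − Σ_i e^i_b ∂_i C^a_{cd} ] vanishes, where all functions on U and their partial derivatives are evaluated at the point φ(x). (This is the Jacobi-type identity C^a_{e[b}C^e_{cd]} = e^i_{[b}∂_i C^a_{cd]}.) -/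
/-- The derivative of `f ∘ φ` along a vector, in terms of the partial derivatives of `f` and the
derivatives of the components of `φ`. -/
theorem cartan_chain_rule {r n : ℕ} {f : (Fin n → ℝ) → ℝ} {φ : (Fin r → ℝ) → (Fin n → ℝ)}
    {x : Fin r → ℝ} (hf : DifferentiableAt ℝ f (φ x)) (hφ : DifferentiableAt ℝ φ x)
    (u : Fin r → ℝ) :
    fderiv ℝ (fun y => f (φ y)) x u
      = ∑ i, fderiv ℝ (fun y => φ y i) x u * pd f i (φ x) := by
  have h1 : fderiv ℝ (fun y => f (φ y)) x = (fderiv ℝ f (φ x)).comp (fderiv ℝ φ x) :=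
    fderiv_comp x hf hφ
  have h2 : ∀ i, fderiv ℝ (fun y => φ y i) x u = fderiv ℝ φ x u i := by
    intro i
    rw [fderiv_apply hφ i]
    rfl
  rw [h1, ContinuousLinearMap.comp_apply]
  conv_lhs => rw [pi_eq_sum_univ' (fderiv ℝ φ x u)]
  simp only [map_sum, map_smul, smul_eq_mul, h2, pd]

/-- The derivative at `x` in the direction `w` of the structure equation evaluated on two constant
vectors `u = E_c`, `v = E_d` dual to the coframe at `x`. The functions `K b c` play the role of
`C^a_{bc} ∘ φ`, and `α` that of `e^a`. -/
theorem cartan_deriv_structure {r : ℕ}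
    {α : (Fin r → ℝ) → ((Fin r → ℝ) →L[ℝ] ℝ)}
    {eA : Fin r → (Fin r → ℝ) → ((Fin r → ℝ) →L[ℝ] ℝ)}
    {K : Fin r → Fin r → (Fin r → ℝ) → ℝ} {x : Fin r → ℝ}
    (hα : DifferentiableAt ℝ (fderiv ℝ α) x)
    (heA : ∀ b, DifferentiableAt ℝ (eA b) x)
    (hK : ∀ b c, DifferentiableAt ℝ (K b c) x)
    {u v : Fin r → ℝ} {c d : Fin r}
    (hu : ∀ p, eA p x u = if p = c then 1 else 0)
    (hv : ∀ p, eA p x v = if p = d then 1 else 0)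
    (hMC : ∀ᶠ y in nhds x, fderiv ℝ α y u v - fderiv ℝ α y v u
        = - ∑ b, ∑ c, K b c y * (eA b y u) * (eA c y v))
    (w : Fin r → ℝ) :
    fderiv ℝ (fderiv ℝ α) x w u v - fderiv ℝ (fderiv ℝ α) x w v u
      = - (fderiv ℝ (K c d) x w + ∑ p, K p d x * fderiv ℝ (eA p) x w u
          + ∑ p, K c p x * fderiv ℝ (eA p) x w v) := by
  have hev : ∀ (s t : Fin r → ℝ), HasFDerivAt (fun y => fderiv ℝ α y s t)
      (((fderiv ℝ (fderiv ℝ α) x).flip s).flip t) x := fun s t => by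
    have h := (hα.hasFDerivAt.clm_apply (hasFDerivAt_const s x)).clm_apply (hasFDerivAt_const t x)
    refine h.congr_fderiv ?_
    ext; simp
  have he : ∀ p (s : Fin r → ℝ), HasFDerivAt (fun y => eA p y s)
      ((fderiv ℝ (eA p) x).flip s) x := fun p s => by
    refine ((heA p).hasFDerivAt.clm_apply (hasFDerivAt_const s x)).congr_fderiv ?_
    ext; simp
  have hR := (HasFDerivAt.fun_sum (u := Finset.univ) fun b _ =>
    HasFDerivAt.fun_sum (u := Finset.univ) fun c _ =>
      (((hK b c).hasFDerivAt.mul (he b u)).mul (he c v))).neg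
  have hL := (hev u v).sub (hev v u)
  have key := congrArg (fun L => L w) (hL.unique (hR.congr_of_eventuallyEq hMC))
  simp only [sub_apply, neg_apply, ContinuousLinearMap.flip_apply] at key
  rw [key]
  simp [hu, hv, Finset.sum_add_distrib]
  ring

/-- **Cartan problem, first necessary condition.**
Given a coframe `e^a` on an open set `N ⊆ ℝ^r`, a smooth map `φ : N → U ⊆ ℝ^n`, and
smooth functions `C^a_{bc}`, `e^i_a` on `U` with `C^a_{bc} = −C^a_{cb}`, such that
`de^a = −(1/2) C^a_{bc}(φ) e^b ∧ e^c` and `dφ^i = e^i_a(φ) e^a`, the Jacobi-type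
identity `C^a_{e[b}C^e_{cd]} = e^i_{[b}∂_i C^a_{cd]}` holds: the cyclic sum over `(b,c,d)`
of `Σ_e C^a_{eb} C^e_{cd} − Σ_i e^i_b ∂_i C^a_{cd}` vanishes, evaluated at `φ(x)`, for
every `x ∈ N`. -/
theorem cartan_first_necessary_condition {r n : ℕ}
    (N : Set (Fin r → ℝ)) (hN : IsOpen N)
    (U : Set (Fin n → ℝ)) (hU : IsOpen U)
    (eA : Fin r → (Fin r → ℝ) → ((Fin r → ℝ) →L[ℝ] ℝ))
    (heA_smooth : ∀ a, ContDiffOn ℝ (⊤ : ℕ∞) (eA a) N)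
    (hcoframe : ∀ x ∈ N, Function.Bijective (fun u : Fin r → ℝ => (fun a => eA a x u)))
    (φ : (Fin r → ℝ) → (Fin n → ℝ))
    (hφ_smooth : ContDiffOn ℝ (⊤ : ℕ∞) φ N)
    (hφU : ∀ x ∈ N, φ x ∈ U)
    (C : Fin r → Fin r → Fin r → (Fin n → ℝ) → ℝ)
    (hC_smooth : ∀ a b c, ContDiffOn ℝ (⊤ : ℕ∞) (C a b c) U)
    (hC_anti : ∀ a b c, ∀ y ∈ U, C a b c y = - C a c b y)
    (eI : Fin n → Fin r → (Fin n → ℝ) → ℝ)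
    (heI_smooth : ∀ i a, ContDiffOn ℝ (⊤ : ℕ∞) (eI i a) U)
    (hMC : ∀ x ∈ N, ∀ (a : Fin r) (u v : Fin r → ℝ),
      fderiv ℝ (eA a) x u v - fderiv ℝ (eA a) x v u
        = - ∑ b, ∑ c, C a b c (φ x) * (eA b x u) * (eA c x v))
    (hdφ : ∀ x ∈ N, ∀ (i : Fin n) (u : Fin r → ℝ),
      fderiv ℝ (fun y => φ y i) x u = ∑ a, eI i a (φ x) * (eA a x u)) :
    ∀ x ∈ N, ∀ (a b c d : Fin r),
      ((∑ e, C a e b (φ x) * C e c d (φ x)) - ∑ i, eI i b (φ x) * pd (C a c d) i (φ x))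
        + ((∑ e, C a e c (φ x) * C e d b (φ x)) - ∑ i, eI i c (φ x) * pd (C a d b) i (φ x))
        + ((∑ e, C a e d (φ x) * C e b c (φ x)) - ∑ i, eI i d (φ x) * pd (C a b c) i (φ x))
        = 0 := by
  intro x hx a b c d
  have hxN : N ∈ nhds x := hN.mem_nhds hx
  have hcd : ∀ p, ContDiffAt ℝ (⊤ : ℕ∞) (eA p) x := fun p => (heA_smooth p).contDiffAt hxN
  have hφd : DifferentiableAt ℝ φ x := (hφ_smooth.contDiffAt hxN).differentiableAt (by simp)
  have hCd : ∀ p q, DifferentiableAt ℝ (C a p q) (φ x) := fun p q =>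
    ((hC_smooth a p q).contDiffAt (hU.mem_nhds (hφU x hx))).differentiableAt (by simp)
  -- The frame `E` dual to the coframe at `x`.
  choose E hE using fun q : Fin r => (hcoframe x hx).2 (fun p => if p = q then 1 else 0)
  have hE : ∀ q p, eA p x (E q) = if p = q then 1 else 0 := fun q p => congrFun (hE q) p
  have h2le : (2 : WithTop ℕ∞) ≤ ((⊤ : ℕ∞) : WithTop ℕ∞) :=
    (by exact_mod_cast le_top : ((2 : ℕ∞) : WithTop ℕ∞) ≤ ((⊤ : ℕ∞) : WithTop ℕ∞))
  have hsymm : ∀ u v, fderiv ℝ (fderiv ℝ (eA a)) x u v = fderiv ℝ (fderiv ℝ (eA a)) x v u :=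
    (hcd a).isSymmSndFDerivAt (by simpa using h2le)
  have hdd : DifferentiableAt ℝ (fderiv ℝ (eA a)) x :=
    ((hcd a).fderiv_right (m := 1) (by rwa [one_add_one_eq_two])).differentiableAt (by simp)
  have hD : ∀ p q s, fderiv ℝ (fderiv ℝ (eA a)) x (E p) (E q) (E s)
        - fderiv ℝ (fderiv ℝ (eA a)) x (E p) (E s) (E q)
      = - (∑ i, eI i p (φ x) * pd (C a q s) i (φ x)
          + ∑ e, C a e s (φ x) * fderiv ℝ (eA e) x (E p) (E q)
          - ∑ e, C a e q (φ x) * fderiv ℝ (eA e) x (E p) (E s)) := by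
    intro p q s
    have h := cartan_deriv_structure (K := fun b c y => C a b c (φ y)) hdd
      (fun b => (hcd b).differentiableAt (by simp)) (fun b c => (hCd b c).comp x hφd)
      (hE q) (hE s) (by filter_upwards [hxN] with y hy using hMC y hy a _ _) (E p)
    have hchain : fderiv ℝ (fun y => C a q s (φ y)) x (E p)
        = ∑ i, eI i p (φ x) * pd (C a q s) i (φ x) := by
      rw [cartan_chain_rule (hCd q s) hφd]
      simp [hdφ x hx, hE]
    rw [h, hchain]
    simp only [fun e => hC_anti a q e (φ x) (hφU x hx), neg_mul, Finset.sum_neg_distrib,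
      sub_eq_add_neg]
  have hS : ∀ p q s, ∑ e, C a e s (φ x) * fderiv ℝ (eA e) x (E p) (E q)
        - ∑ e, C a e s (φ x) * fderiv ℝ (eA e) x (E q) (E p)
      = - ∑ e, C a e s (φ x) * C e p q (φ x) := by
    intro p q s
    rw [← Finset.sum_sub_distrib, ← Finset.sum_neg_distrib]
    refine Finset.sum_congr rfl fun e _ => ?_
    rw [← mul_sub, hMC x hx]
    simp [hE]
  have h1 := hD b c d
  have h2 := hD c d b
  have h3 := hD d b c
  rw [hsymm (E c) (E b)] at h2
  rw [hsymm (E d) (E b), hsymm (E d) (E c)] at h3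
  linarith [hS b c d, hS c d b, hS d b c]
end

section
/- Let O : V → V be an orthogonal linear map (⟨Ox, Oy⟩ = ⟨x, y⟩ for all x, y ∈ V) and let b : V → V be a self-adjoint linear map that is either positive definite (⟨bx, x⟩ > 0 for all x ≠ 0) or negative definite (⟨bx, x⟩ < 0 for all x ≠ 0). Then the linear map (id − O) + b ∘ (id + O) is invertible. -/
/-!
If `x` lies in the kernel, then `(x - O x) + b (x + O x) = 0`. Since `O` is an isometry,
`x - O x` is orthogonal to `x + O x`, so pairing with `x + O x` gives
`⟪b (x + O x), x + O x⟫ = 0`. Definiteness of `b` forces `x + O x = 0`, hence also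
`x - O x = 0`, and so `x = 0`. Injectivity gives bijectivity in finite dimension.
-/

open scoped RealInnerProductSpace

/-- Let `V` be a finite-dimensional real inner product space, `O : V → V` an orthogonal
linear map, and `b : V → V` a self-adjoint linear map which is positive definite or
negative definite. Then the linear map `(id − O) + b ∘ (id + O)` is invertible. -/
theorem invertible_id_sub_O_add_b_comp_id_add_O
    {V : Type*} [NormedAddCommGroup V] [InnerProductSpace ℝ V] [FiniteDimensional ℝ V]
    (O b : V →ₗ[ℝ] V)
    (hO : ∀ x y : V, ⟪O x, O y⟫ = ⟪x, y⟫)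
    (hb_selfadjoint : ∀ x y : V, ⟪b x, y⟫ = ⟪x, b y⟫)
    (hb_definite : (∀ x : V, x ≠ 0 → 0 < ⟪b x, x⟫) ∨ (∀ x : V, x ≠ 0 → ⟪b x, x⟫ < 0)) :
    Function.Bijective ⇑(((LinearMap.id : V →ₗ[ℝ] V) - O) + b ∘ₗ ((LinearMap.id : V →ₗ[ℝ] V) + O)) := by
  -- In finite dimension it suffices that the kernel is trivial.
  suffices h : Function.Injective
      ⇑(((LinearMap.id : V →ₗ[ℝ] V) - O) + b ∘ₗ ((LinearMap.id : V →ₗ[ℝ] V) + O)) from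
    ⟨h, LinearMap.injective_iff_surjective.mp h⟩
  refine (injective_iff_map_eq_zero _).mpr fun x hx => ?_
  have hker : (x - O x) + b (x + O x) = 0 := by simpa using hx
  -- `O` preserves the norm, so `x - O x` is orthogonal to `x + O x`.
  have horth : ⟪x - O x, x + O x⟫ = 0 := by
    rw [inner_sub_left, inner_add_right, inner_add_right, hO, real_inner_comm x (O x)]
    ring
  -- Pairing the kernel equation with `x + O x` therefore leaves only the quadratic form of `b`.
  have hquad : ⟪b (x + O x), x + O x⟫ = 0 := by
    have h := congrArg (fun z => ⟪z, x + O x⟫) hker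
    simpa only [inner_add_left _ (b _), horth, zero_add, inner_zero_left] using h
  have hsum : x + O x = 0 := by
    by_contra hne
    rcases hb_definite with h | h
    · exact (h _ hne).ne' hquad
    · exact (h _ hne).ne hquad
  have hdiff : x - O x = 0 := by simpa [hsum] using hker
  have htwo : (2 : ℝ) • x = 0 := by
    calc (2 : ℝ) • x = (x + O x) + (x - O x) := by rw [two_smul]; abel
      _ = 0 := by rw [hsum, hdiff, add_zero]
  exact (smul_eq_zero.mp htwo).resolve_left two_ne_zero
end

section
/- The matrices g⁻¹ + π, g⁻¹ − π, and g⁻¹ − π g π are all invertible, and the following identity holds: (g⁻¹ + π)⁻¹ · g⁻¹ · (g⁻¹ − π)⁻¹ = (g⁻¹ − π g π)⁻¹. -/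
/-!
The antisymmetric part of a real matrix does not contribute to its quadratic form, so
`xᵀ (g⁻¹ ± π) x = xᵀ g⁻¹ x > 0` for `x ≠ 0`, and `g⁻¹ ± π` have trivial kernel. Everything
else follows from the factorization `g⁻¹ - π g π = (g⁻¹ - π) g (g⁻¹ + π)`.
-/

open Matrix in
lemma isUnit_posDef_add_antisymm {n : ℕ} {A B : Matrix (Fin n) (Fin n) ℝ}
    (hA : A.PosDef) (hB : Bᵀ = -B) : IsUnit (A + B) := by
  rw [isUnit_iff_isUnit_det, isUnit_iff_ne_zero]
  intro hdet
  obtain ⟨v, hv, h0⟩ := exists_mulVec_eq_zero_iff.mpr hdet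
  have hBv : v ⬝ᵥ (B *ᵥ v) = 0 := by
    have h : v ⬝ᵥ (B *ᵥ v) = -(v ⬝ᵥ (B *ᵥ v)) := by
      conv_lhs => rw [dotProduct_mulVec, ← mulVec_transpose, hB, neg_mulVec,
        neg_dotProduct, dotProduct_comm]
    linarith
  have hpos := hA.dotProduct_mulVec_pos hv
  have hsum : v ⬝ᵥ ((A + B) *ᵥ v) = 0 := by rw [h0, dotProduct_zero]
  rw [add_mulVec, dotProduct_add, hBv, add_zero] at hsum
  rw [star_trivial, hsum] at hpos
  exact lt_irrefl _ hpos


/-- Let `g` be a real symmetric positive-definite `n×n` matrix and `π` a real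
antisymmetric `n×n` matrix. Then `g⁻¹ + π`, `g⁻¹ − π` and `g⁻¹ − π g π` are invertible,
and `(g⁻¹ + π)⁻¹ · g⁻¹ · (g⁻¹ − π)⁻¹ = (g⁻¹ − π g π)⁻¹`. -/
theorem inv_ginv_add_pi_mul_ginv_mul_inv_ginv_sub_pi {n : ℕ} (hn : 1 ≤ n)
    (g π : Matrix (Fin n) (Fin n) ℝ)
    (hg : g.PosDef) (hπ : π.transpose = -π) :
    IsUnit (g⁻¹ + π) ∧ IsUnit (g⁻¹ - π) ∧ IsUnit (g⁻¹ - π * g * π) ∧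
      (g⁻¹ + π)⁻¹ * g⁻¹ * (g⁻¹ - π)⁻¹ = (g⁻¹ - π * g * π)⁻¹ := by
  have hplus : IsUnit (g⁻¹ + π) := isUnit_posDef_add_antisymm hg.inv hπ
  have hminus : IsUnit (g⁻¹ - π) := by
    rw [sub_eq_add_neg]
    exact isUnit_posDef_add_antisymm hg.inv (by rw [Matrix.transpose_neg, hπ])
  have hdet : IsUnit g.det := (Matrix.isUnit_iff_isUnit_det g).mp hg.isUnit
  have hfact : g⁻¹ - π * g * π = (g⁻¹ - π) * g * (g⁻¹ + π) := by
    rw [sub_mul, Matrix.nonsing_inv_mul g hdet, sub_mul, one_mul, mul_add,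
      Matrix.mul_nonsing_inv_cancel_right g π hdet]
    abel
  refine ⟨hplus, hminus, ?_, ?_⟩
  · rw [hfact]
    exact (hminus.mul hg.isUnit).mul hplus
  · rw [hfact, Matrix.mul_inv_rev, Matrix.mul_inv_rev, mul_assoc]
end

section
/- The matrices I + πg, I − πg, and I − πgπg = (I + πg)(I − πg) are invertible, the matrices g⁻¹ + π and g⁻¹ − π are invertible, and (g⁻¹ + π)⁻¹ = g (I − πg) (I − πgπg)⁻¹ and (g⁻¹ − π)⁻¹ = g (I + πg) (I − πgπg)⁻¹. -/
/-! For antisymmetric `π` the quadratic form of `h + π` is that of `h`, so `h + π` is injective,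
hence invertible, when `h` is positive definite. With `h = g⁻¹` this gives invertibility of
`g⁻¹ ± π` and of `1 ± π g = (g⁻¹ ± π) g`; the formulas follow from
`(g⁻¹ ± π) g (1 ∓ π g) = 1 - π g π g`. -/

open Matrix in
theorem isUnit_posDef_add_antisymm_s9 {n : ℕ} (h π : Matrix (Fin n) (Fin n) ℝ)
    (hh : h.PosDef) (hπ : π.transpose = -π) : IsUnit (h + π) := by
  rw [← Matrix.mulVec_injective_iff_isUnit]
  refine (injective_iff_map_eq_zero (h + π).mulVecLin).2 fun x hx => ?_
  by_contra hne
  have hpos : 0 < x ⬝ᵥ (h *ᵥ x) := by simpa using hh.dotProduct_mulVec_pos hne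
  have hskew : x ⬝ᵥ (π *ᵥ x) = 0 := by
    have : x ⬝ᵥ (π *ᵥ x) = -(x ⬝ᵥ (π *ᵥ x)) := by
      conv_lhs => rw [dotProduct_mulVec, ← mulVec_transpose, hπ, neg_mulVec, neg_dotProduct,
        dotProduct_comm]
    linarith
  have hsum : x ⬝ᵥ ((h + π) *ᵥ x) = 0 := by
    rw [show (h + π) *ᵥ x = 0 from hx, dotProduct_zero]
  rw [add_mulVec, dotProduct_add, hskew] at hsum
  linarith

/-- Let `g` be a real symmetric positive-definite `n×n` matrix and `π` a real
antisymmetric `n×n` matrix. Then `I + πg`, `I − πg` and `I − πgπg = (I + πg)(I − πg)`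
are invertible, `g⁻¹ + π` and `g⁻¹ − π` are invertible, and
`(g⁻¹ + π)⁻¹ = g (I − πg) (I − πgπg)⁻¹` and `(g⁻¹ − π)⁻¹ = g (I + πg) (I − πgπg)⁻¹`. -/
theorem inv_ginv_pm_pi_formulas {n : ℕ} (hn : 1 ≤ n)
    (g π : Matrix (Fin n) (Fin n) ℝ)
    (hg : g.PosDef) (hπ : π.transpose = -π) :
    IsUnit (1 + π * g) ∧ IsUnit (1 - π * g) ∧ IsUnit (1 - π * g * π * g) ∧
      (1 - π * g * π * g : Matrix (Fin n) (Fin n) ℝ) = (1 + π * g) * (1 - π * g) ∧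
      IsUnit (g⁻¹ + π) ∧ IsUnit (g⁻¹ - π) ∧
      (g⁻¹ + π)⁻¹ = g * (1 - π * g) * (1 - π * g * π * g)⁻¹ ∧
      (g⁻¹ - π)⁻¹ = g * (1 + π * g) * (1 - π * g * π * g)⁻¹ := by
  have hgd : IsUnit g.det := (Matrix.isUnit_iff_isUnit_det g).1 hg.isUnit
  have hgg : g⁻¹ * g = 1 := Matrix.nonsing_inv_mul g hgd
  have hp : IsUnit (g⁻¹ + π) := isUnit_posDef_add_antisymm_s9 _ _ hg.inv hπ
  have hm : IsUnit (g⁻¹ - π) := by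
    rw [sub_eq_add_neg]
    exact isUnit_posDef_add_antisymm_s9 _ _ hg.inv (by rw [Matrix.transpose_neg, hπ])
  have ep : (g⁻¹ + π) * g = 1 + π * g := by rw [add_mul, hgg]
  have em : (g⁻¹ - π) * g = 1 - π * g := by rw [sub_mul, hgg]
  have up : IsUnit (1 + π * g) := ep ▸ hp.mul hg.isUnit
  have um : IsUnit (1 - π * g) := em ▸ hm.mul hg.isUnit
  have e1 : 1 - π * g * π * g = (1 + π * g) * (1 - π * g) := by noncomm_ring
  have e2 : 1 - π * g * π * g = (1 - π * g) * (1 + π * g) := by noncomm_ring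
  have uD : IsUnit (1 - π * g * π * g) := e1 ▸ up.mul um
  have hD := Matrix.mul_nonsing_inv _ ((Matrix.isUnit_iff_isUnit_det _).1 uD)
  refine ⟨up, um, uD, e1, hp, hm, Matrix.inv_eq_right_inv ?_, Matrix.inv_eq_right_inv ?_⟩
  · rw [← mul_assoc, ← mul_assoc, ep, ← e1, hD]
  · rw [← mul_assoc, ← mul_assoc, em, ← e2, hD]
end
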